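/- arXiv:2401.15308 — 3 statements merged into one kernel-verified Lean document; each statement's English description precedes it below -/
import Mathlib

section
/- Let F be a finite field, let h ∈ F[x] be a monic polynomial of degree u ≥ 1, let 0 < r ≤ u, let y_1, …, y_k ∈ F be pairwise distinct, and let f_1, …, f_k ∈ F[x] each have degree < r. Then there exists a unique polynomial f ∈ F[x] with deg(f) < u(k−1) + r such that f ≡ f_i (mod h(x) − y_i) for every i ∈ {1,…,k}. -/
open Polynomial

/-!
Substituting `h` for `X` turns Lagrange interpolation at the nodes `y i` into interpolation modulo
the polynomials `h - C (y i)`. If `L i` is the Lagrange basis, then `L i ∘ h` is congruent to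
`L i (y j)`, i.e. to `1` or `0`, modulo `h - C (y j)`, so `∑ i, g i * (L i ∘ h)` has the prescribed
residues. The difference of two solutions is divisible by `∏ i, (h - C (y i))`, whose degree is
too large unless the difference vanishes.
-/

theorem eq_zero_of_dvd_of_degree_lt_natDegree {R : Type*} [Semiring R] [NoZeroDivisors R]
    {p q : R[X]} (hdvd : p ∣ q) (hlt : q.degree < p.natDegree) : q = 0 := by
  by_contra hq
  exact ((natDegree_lt_iff_degree_lt hq).2 hlt).not_ge (natDegree_le_of_dvd hdvd hq)

section CommRing

variable {R : Type*} [CommRing R]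

theorem sub_C_dvd_comp_sub_C_eval (h p : R[X]) (a : R) : h - C a ∣ p.comp h - C (p.eval a) := by
  have hdvd : (X - C a).comp h ∣ (p - C (p.eval a)).comp h :=
    map_dvd (compRingHom h) X_sub_C_dvd_sub_C_eval
  simpa only [sub_comp, X_comp, C_comp] using hdvd

theorem isCoprime_sub_C_of_isUnit_sub (h : R[X]) {a b : R} (hab : IsUnit (a - b)) :
    IsCoprime (h - C a) (h - C b) := by
  have hcop : IsCoprime ((X - C a).comp h) ((X - C b).comp h) :=
    (isCoprime_X_sub_C_of_isUnit_sub hab).map (compRingHom h)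
  simpa only [sub_comp, X_comp, C_comp] using hcop

theorem nodal_comp_dvd_of_forall_sub_C_dvd {ι : Type*} {s : Finset ι} {y : ι → R} {h f : R[X]}
    (hy : (s : Set ι).Pairwise fun i j ↦ IsUnit (y i - y j)) (hf : ∀ i ∈ s, h - C (y i) ∣ f) :
    (Lagrange.nodal s y).comp h ∣ f := by
  simp only [Lagrange.nodal, prod_comp, sub_comp, X_comp, C_comp]
  exact Finset.prod_dvd_of_coprime
    (fun i hi j hj hij ↦ isCoprime_sub_C_of_isUnit_sub h (hy hi hj hij)) hf

end CommRing

section Field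

variable {F ι : Type*} [Field F] {s : Finset ι} {y : ι → F}

theorem eq_of_forall_sub_C_dvd_sub (hy : Set.InjOn y s) {h f₁ f₂ : F[X]}
    (hf₁ : f₁.degree < (h.natDegree * s.card : ℕ)) (hf₂ : f₂.degree < (h.natDegree * s.card : ℕ))
    (hdvd : ∀ i ∈ s, h - C (y i) ∣ f₁ - f₂) : f₁ = f₂ := by
  have hunit : (s : Set ι).Pairwise fun i j ↦ IsUnit (y i - y j) := fun i hi j hj hij ↦
    (sub_ne_zero.2 (hy.ne hi hj hij)).isUnit
  refine sub_eq_zero.1 (eq_zero_of_dvd_of_degree_lt_natDegree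
    (nodal_comp_dvd_of_forall_sub_C_dvd hunit hdvd) ?_)
  rw [natDegree_comp, Lagrange.natDegree_nodal, mul_comm]
  exact (degree_sub_le f₁ f₂).trans_lt (max_lt hf₁ hf₂)

variable [DecidableEq ι]

/-- The interpolant `∑ i ∈ s, g i * (L i ∘ h)`, where `L` is the Lagrange basis for the nodes `y`.
For distinct nodes it solves the congruences `f ≡ g i (mod h - C (y i))`; the case `h = X` with
constant `g i` is `Lagrange.interpolate`. -/
noncomputable def compInterpolate (s : Finset ι) (y : ι → F) (h : F[X]) (g : ι → F[X]) : F[X] :=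
  ∑ i ∈ s, g i * (Lagrange.basis s y i).comp h

theorem degree_basis_comp_le (hy : Set.InjOn y s) (h : F[X]) {i : ι} (hi : i ∈ s) :
    ((Lagrange.basis s y i).comp h).degree ≤ (h.natDegree * (s.card - 1) : ℕ) := by
  have hbasis : (Lagrange.basis s y i).natDegree = s.card - 1 :=
    natDegree_eq_of_degree_eq_some (Lagrange.degree_basis hy hi)
  rw [mul_comm, ← hbasis, ← natDegree_comp]
  exact degree_le_natDegree

theorem degree_compInterpolate_lt (hy : Set.InjOn y s) (h : F[X]) {g : ι → F[X]} {r : ℕ}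
    (hg : ∀ i ∈ s, (g i).degree < r) :
    (compInterpolate s y h g).degree < (h.natDegree * (s.card - 1) + r : ℕ) := by
  refine mem_degreeLT.1 (Submodule.sum_mem _ fun i hi ↦ mem_degreeLT.2 ?_)
  calc (g i * (Lagrange.basis s y i).comp h).degree
      = ((Lagrange.basis s y i).comp h).degree + (g i).degree := by rw [degree_mul, add_comm]
    _ ≤ (h.natDegree * (s.card - 1) : ℕ) + (g i).degree := by
        gcongr
        exact degree_basis_comp_le hy h hi
    _ < (h.natDegree * (s.card - 1) : ℕ) + r :=
        WithBot.add_lt_add_left (WithBot.natCast_ne_bot _) (hg i hi)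
    _ = (h.natDegree * (s.card - 1) + r : ℕ) := (Nat.cast_add _ _).symm

theorem sum_mul_C_eval_basis (hy : Set.InjOn y s) (g : ι → F[X]) {j : ι} (hj : j ∈ s) :
    ∑ i ∈ s, g i * C ((Lagrange.basis s y i).eval (y j)) = g j := by
  rw [Finset.sum_eq_single_of_mem j hj]
  · rw [Lagrange.eval_basis_self hy hj, C_1, mul_one]
  · intro i _ hij
    rw [Lagrange.eval_basis_of_ne hij hj, C_0, mul_zero]

theorem sub_C_dvd_compInterpolate_sub (hy : Set.InjOn y s) (h : F[X]) (g : ι → F[X]) {j : ι}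
    (hj : j ∈ s) : h - C (y j) ∣ compInterpolate s y h g - g j := by
  rw [← sum_mul_C_eval_basis hy g hj]
  simp only [compInterpolate, ← Finset.sum_sub_distrib, ← mul_sub]
  exact Finset.dvd_sum fun i _ ↦ (sub_C_dvd_comp_sub_C_eval h _ _).mul_left _

end Field

theorem stmt_2_general {F ι : Type*} [Field F] {s : Finset ι} (hs : s.Nonempty) {y : ι → F}
    (hy : Set.InjOn y s) {h : F[X]} {r : ℕ} (hr : r ≤ h.natDegree) {g : ι → F[X]}
    (hg : ∀ i ∈ s, (g i).degree < r) :
    ∃! f : F[X], f.degree < (h.natDegree * (s.card - 1) + r : ℕ) ∧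
      ∀ i ∈ s, h - C (y i) ∣ f - g i := by
  classical
  have hbound : h.natDegree * (s.card - 1) + r ≤ h.natDegree * s.card :=
    calc h.natDegree * (s.card - 1) + r
        ≤ h.natDegree * (s.card - 1) + h.natDegree := by gcongr
      _ = h.natDegree * s.card := by
          rw [← mul_add_one, Nat.sub_add_cancel (Finset.one_le_card.2 hs)]
  have hlt {f : F[X]} (hf : f.degree < (h.natDegree * (s.card - 1) + r : ℕ)) :
      f.degree < (h.natDegree * s.card : ℕ) := hf.trans_le (Nat.cast_le.2 hbound)
  refine existsUnique_of_exists_of_unique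
    ⟨compInterpolate s y h g, degree_compInterpolate_lt hy h hg,
      fun i hi ↦ sub_C_dvd_compInterpolate_sub hy h g hi⟩ ?_
  rintro f₁ f₂ ⟨hdeg₁, hf₁⟩ ⟨hdeg₂, hf₂⟩
  refine eq_of_forall_sub_C_dvd_sub hy (hlt hdeg₁) (hlt hdeg₂) fun i hi ↦ ?_
  simpa only [sub_sub_sub_cancel_right] using dvd_sub (hf₁ i hi) (hf₂ i hi)

/-- Existence and uniqueness of the encoding polynomial: given `k` pairwise
distinct points `y i` and residues `g i` of degree `< r`, there is a unique
polynomial `f` of degree `< u(k-1) + r` with `f ≡ g i (mod h - y i)` for all `i`. -/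
theorem stmt_2 {F : Type*} [Field F] [Fintype F]
    (h : F[X]) (u r k : ℕ) (hu : 1 ≤ u) (hmonic : h.Monic) (hdeg : h.natDegree = u)
    (hr : 0 < r) (hru : r ≤ u) (hk : 0 < k)
    (y : Fin k → F) (hy : Function.Injective y)
    (g : Fin k → F[X]) (hg : ∀ i, (g i).degree < ((r : ℕ) : WithBot ℕ)) :
    ∃! f : F[X], f.degree < ((u * (k - 1) + r : ℕ) : WithBot ℕ) ∧
      ∀ i : Fin k, (h - C (y i)) ∣ (f - g i) := by
  have hne : (Finset.univ : Finset (Fin k)).Nonempty := ⟨⟨0, hk⟩, Finset.mem_univ _⟩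
  simpa [hdeg] using stmt_2_general hne hy.injOn (hru.trans_eq hdeg.symm) fun i _ ↦ hg i
end

section
/- Let F be a finite field, let h ∈ F[x] be a monic polynomial of degree u ≥ 1, let 0 < r ≤ u, and let y_1, …, y_k ∈ F be pairwise distinct. Then the set Ψ(k,u,r) = { f ∈ F[x] : deg(f) < u(k−1) + r and, for each i ∈ {1,…,k}, the remainder of f upon division by h(x) − y_i has degree < r } is an F-linear subspace of F[x] of dimension r·k. -/
open Polynomial

/-!
The polynomials `h - y i` are pairwise coprime, so by the Chinese remainder theorem a polynomial
of degree less than `u * k` is determined by its `k` remainders modulo them; hence taking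
remainders embeds `Ψ(k, u, r)` into the `k`-tuples of polynomials of degree less than `r`.
Conversely, if `L i` is the Lagrange basis of the nodes `y`, then `(L i) ∘ h` is congruent to
`L i (y j)`, that is to `0` or `1`, modulo `h - y j`. So `∑ i, g i * (L i) ∘ h` has the prescribed
remainders `g i`, and its degree is less than `u * (k - 1) + r`.
-/

section CommRing

variable {R : Type*} [CommRing R]

theorem monic_sub_C {h : R[X]} (hmonic : h.Monic) (hpos : 0 < h.natDegree) (a : R) :
    (h - C a).Monic :=
  hmonic.sub_of_left (degree_C_le.trans_lt (natDegree_pos_iff_degree_pos.mp hpos))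

theorem degree_mul_comp_lt {g : R[X]} {r : ℕ} (hg : g.degree < r) (p h : R[X]) :
    (g * p.comp h).degree < (h.natDegree * p.natDegree + r : ℕ) := by
  rcases eq_or_ne g 0 with rfl | hg0
  · simp only [zero_mul, degree_zero, WithBot.bot_lt_natCast]
  · have hg_nat : g.natDegree < r := (natDegree_lt_iff_degree_lt hg0).mpr hg
    refine degree_le_natDegree.trans_lt (Nat.cast_lt.mpr ?_)
    calc (g * p.comp h).natDegree
        ≤ g.natDegree + p.natDegree * h.natDegree :=
          natDegree_mul_le.trans (Nat.add_le_add_left natDegree_comp_le _)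
      _ < h.natDegree * p.natDegree + r := by linarith

end CommRing

section Field

variable {F ι : Type*} [Field F] [Fintype ι] {h : F[X]} {y : ι → F} {r : ℕ}

theorem eq_zero_of_forall_sub_C_dvd (hy : Function.Injective y) (hpos : 0 < h.natDegree)
    {f : F[X]} (hf : f.degree < (h.natDegree * Fintype.card ι : ℕ))
    (hdvd : ∀ i, h - C (y i) ∣ f) : f = 0 := by
  have hcoprime : Pairwise (Function.onFun IsCoprime fun i => h - C (y i)) := fun i j hij =>
    isCoprime_sub_C_of_isUnit_sub h (sub_ne_zero.mpr (hy.ne hij)).isUnit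
  have hdegree (i : ι) : (h - C (y i)).degree = h.natDegree := by
    rw [degree_sub_C (natDegree_pos_iff_degree_pos.mp hpos),
      degree_eq_natDegree (ne_zero_of_natDegree_gt hpos)]
  refine eq_zero_of_dvd_of_degree_lt (Fintype.prod_dvd_of_coprime hcoprime hdvd) (hf.trans_eq ?_)
  simp [degree_prod, hdegree, mul_comm]

section LagrangeLift

variable [DecidableEq ι]

/-- The polynomial with prescribed remainders `g i` modulo `h - y i`: Lagrange interpolation with
polynomial values, the Lagrange basis of the nodes `y` being evaluated at `h`. -/
noncomputable def lagrangeLift (h : F[X]) (y : ι → F) (g : ι → F[X]) : F[X] :=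
  ∑ i, g i * (Lagrange.basis Finset.univ y i).comp h

theorem sub_C_dvd_lagrangeLift_sub (h : F[X]) (hy : Function.Injective y) (g : ι → F[X]) (j : ι) :
    h - C (y j) ∣ lagrangeLift h y g - g j := by
  have hg : g j = ∑ i, g i * C ((Lagrange.basis Finset.univ y i).eval (y j)) := by
    rw [Fintype.sum_eq_single j fun i hij => by
        rw [Lagrange.eval_basis_of_ne hij (Finset.mem_univ j), C_0, mul_zero],
      Lagrange.eval_basis_self hy.injOn (Finset.mem_univ j), C_1, mul_one]
  rw [lagrangeLift, hg, ← Finset.sum_sub_distrib]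
  refine Finset.dvd_sum fun i _ => ?_
  rw [← mul_sub]
  exact (sub_C_dvd_comp_sub_C_eval _ _ _).mul_left _

theorem lagrangeLift_modByMonic (hmonic : h.Monic) (hpos : 0 < h.natDegree)
    (hy : Function.Injective y) {g : ι → F[X]} {j : ι} (hg : (g j).degree < h.degree) :
    lagrangeLift h y g %ₘ (h - C (y j)) = g j := by
  have hmonic_j := monic_sub_C hmonic hpos (y j)
  rw [modByMonic_eq_of_dvd_sub hmonic_j (sub_C_dvd_lagrangeLift_sub h hy g j),
    modByMonic_eq_self_iff hmonic_j, degree_sub_C (natDegree_pos_iff_degree_pos.mp hpos)]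
  exact hg

theorem degree_lagrangeLift_lt (h : F[X]) (hy : Function.Injective y) {g : ι → F[X]}
    (hg : ∀ i, (g i).degree < r) :
    (lagrangeLift h y g).degree < (h.natDegree * (Fintype.card ι - 1) + r : ℕ) := by
  have hbasis (i : ι) : (Lagrange.basis Finset.univ y i).natDegree = Fintype.card ι - 1 :=
    natDegree_eq_of_degree_eq_some (Lagrange.degree_basis hy.injOn (Finset.mem_univ i))
  refine mem_degreeLT.mp (Submodule.sum_mem _ fun i _ => mem_degreeLT.mpr ?_)
  rw [← hbasis i]
  exact degree_mul_comp_lt (hg i) _ h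

end LagrangeLift

/-- The space `Ψ(k, u, r)` of encoding polynomials, where `u` is the degree of `h` and `k` is the
number of points `y i`. The subtraction in `k - 1` is truncated, so the notion is the intended one
only for nonempty `ι`. -/
noncomputable def encodingSpace (h : F[X]) (y : ι → F) (r : ℕ) : Submodule F F[X] :=
  degreeLT F (h.natDegree * (Fintype.card ι - 1) + r) ⊓
    ⨅ i, (degreeLT F r).comap (modByMonicHom (h - C (y i)))

theorem mem_encodingSpace {f : F[X]} :
    f ∈ encodingSpace h y r ↔
      f.degree < (h.natDegree * (Fintype.card ι - 1) + r : ℕ) ∧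
        ∀ i, (f %ₘ (h - C (y i))).degree < r := by
  simp only [encodingSpace, Submodule.mem_inf, Submodule.mem_iInf, Submodule.mem_comap,
    mem_degreeLT, modByMonicHom_apply]

/-- The Chinese remainder map on the encoding space, sending `f` to the tuple of its remainders
modulo the polynomials `h - y i`. -/
noncomputable def remainderMap (h : F[X]) (y : ι → F) (r : ℕ) :
    encodingSpace h y r →ₗ[F] ι → degreeLT F r :=
  LinearMap.pi fun i =>
    ((modByMonicHom (h - C (y i))).comp (encodingSpace h y r).subtype).codRestrict _
      fun f => mem_degreeLT.mpr ((mem_encodingSpace.mp f.2).2 i)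

theorem coe_remainderMap_apply (f : encodingSpace h y r) (i : ι) :
    (remainderMap h y r f i : F[X]) = f %ₘ (h - C (y i)) :=
  rfl

theorem remainderMap_injective [Nonempty ι] (hmonic : h.Monic) (hpos : 0 < h.natDegree)
    (hr : r ≤ h.natDegree) (hy : Function.Injective y) :
    Function.Injective (remainderMap h y r) := by
  refine (injective_iff_map_eq_zero _).mpr fun f hf => Subtype.ext ?_
  have hbound : h.natDegree * (Fintype.card ι - 1) + r ≤ h.natDegree * Fintype.card ι :=
    calc h.natDegree * (Fintype.card ι - 1) + r
        ≤ h.natDegree * (Fintype.card ι - 1 + 1) := Nat.add_le_add_left hr _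
      _ = h.natDegree * Fintype.card ι := by rw [Nat.sub_add_cancel Fintype.card_pos]
  refine eq_zero_of_forall_sub_C_dvd hy hpos
    ((mem_encodingSpace.mp f.2).1.trans_le (Nat.cast_le.mpr hbound)) fun i => ?_
  rw [← modByMonic_eq_zero_iff_dvd (monic_sub_C hmonic hpos (y i)), ← coe_remainderMap_apply, hf,
    Pi.zero_apply, Submodule.coe_zero]

theorem remainderMap_surjective (hmonic : h.Monic) (hpos : 0 < h.natDegree)
    (hr : r ≤ h.natDegree) (hy : Function.Injective y) :
    Function.Surjective (remainderMap h y r) := by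
  classical
  intro g
  have hg (i : ι) : (g i : F[X]).degree < r := mem_degreeLT.mp (g i).2
  have hg_lt (i : ι) : (g i : F[X]).degree < h.degree :=
    (hg i).trans_le (degree_eq_natDegree hmonic.ne_zero ▸ Nat.cast_le.mpr hr)
  have hmod (i : ι) : lagrangeLift h y (fun i => (g i : F[X])) %ₘ (h - C (y i)) = g i :=
    lagrangeLift_modByMonic hmonic hpos hy (hg_lt i)
  refine ⟨⟨lagrangeLift h y fun i => (g i : F[X]), mem_encodingSpace.mpr
    ⟨degree_lagrangeLift_lt h hy hg, fun i => ?_⟩⟩, funext fun i => Subtype.ext (hmod i)⟩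
  rw [hmod]
  exact hg i

theorem finrank_encodingSpace [Nonempty ι] (hmonic : h.Monic) (hpos : 0 < h.natDegree)
    (hr : r ≤ h.natDegree) (hy : Function.Injective y) :
    Module.finrank F (encodingSpace h y r) = r * Fintype.card ι := by
  have hbij : Function.Bijective (remainderMap h y r) :=
    ⟨remainderMap_injective hmonic hpos hr hy, remainderMap_surjective hmonic hpos hr hy⟩
  calc Module.finrank F (encodingSpace h y r)
      = Module.finrank F (ι → degreeLT F r) := (LinearEquiv.ofBijective _ hbij).finrank_eq
    _ = Module.finrank F (ι → Fin r → F) :=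
        (LinearEquiv.piCongrRight fun _ => degreeLTEquiv F r).finrank_eq
    _ = r * Fintype.card ι := by simp [Module.finrank_pi_fintype, mul_comm]

end Field

theorem stmt_3_general {F ι : Type*} [Field F] [Fintype ι] [Nonempty ι] {h : F[X]} {r : ℕ}
    (hmonic : h.Monic) (hpos : 0 < h.natDegree) (hr : r ≤ h.natDegree)
    {y : ι → F} (hy : Function.Injective y) :
    ∃ S : Submodule F F[X],
      (S : Set F[X]) =
        {f : F[X] | f.degree < (h.natDegree * (Fintype.card ι - 1) + r : ℕ) ∧
          ∀ i, (f %ₘ (h - C (y i))).degree < r} ∧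
      Module.finrank F S = r * Fintype.card ι :=
  ⟨encodingSpace h y r, Set.ext fun _ => mem_encodingSpace,
    finrank_encodingSpace hmonic hpos hr hy⟩

/-- The set `Ψ(k,u,r)` of encoding polynomials, i.e. polynomials of degree
`< u(k-1) + r` whose remainder modulo `h - y i` has degree `< r` for each of the
`k` pairwise distinct points `y i`, is an `F`-linear subspace of `F[X]` of
dimension `r * k`. -/
theorem stmt_3 {F : Type*} [Field F] [Fintype F]
    (h : F[X]) (u r k : ℕ) (hu : 1 ≤ u) (hmonic : h.Monic) (hdeg : h.natDegree = u)
    (hr : 0 < r) (hru : r ≤ u) (hk : 0 < k)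
    (y : Fin k → F) (hy : Function.Injective y) :
    ∃ S : Submodule F F[X],
      (S : Set F[X]) =
        {f : F[X] | f.degree < ((u * (k - 1) + r : ℕ) : WithBot ℕ) ∧
          ∀ i : Fin k, (f %ₘ (h - C (y i))).degree < ((r : ℕ) : WithBot ℕ)} ∧
      Module.finrank F S = r * k := by
  have : Nonempty (Fin k) := ⟨⟨0, hk⟩⟩
  simpa only [hdeg, Fintype.card_fin] using
    stmt_3_general hmonic (hu.trans_eq hdeg.symm) (hru.trans_eq hdeg.symm) hy
end

section
/- Let F be a finite field, let h ∈ F[x] be a monic polynomial of degree u, let 0 < r < u, let 0 < k̄ < n̄, let y_1, …, y_{n̄} ∈ F be pairwise distinct, and for each i ∈ {1,…,n̄} let A_i ⊆ F be a set of exactly u distinct elements such that h(α) = y_i for every α ∈ A_i. Let f, g ∈ F[x] both satisfy deg < u(k̄−1) + r and have remainders of degree < r upon division by h(x) − y_i for each i ∈ {1,…,k̄}. If for some i ∈ {1,…,n̄} there is a subset B ⊆ A_i with |B| ≥ r such that f(α) = g(α) for all α ∈ B, then f(α) = g(α) for all α ∈ A_i. -/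
open Polynomial

/-!
Dividing repeatedly by `h` shows that, for fixed `m`, the `m`-th coefficient of the remainder of `p`
modulo `h - z` is a polynomial in `z`, of degree less than `n` as soon as
`deg p < n * deg h + m`. If it vanishes for `n` distinct values of `z`, it vanishes for every `z`.
Hence the remainder of `f - g` has degree less than `r` modulo `h - z` for every `z`. On the fibre
`h = z` this remainder takes the same values as `f - g`, so `r` zeros there force it to vanish.
-/

section Remainders

variable {R : Type*} [CommRing R] {h p : R[X]}

theorem monic_sub_C_of_natDegree_ne_zero (hmonic : h.Monic) (hdeg : h.natDegree ≠ 0) (z : R) :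
    (h - C z).Monic :=
  hmonic.sub_of_left <| degree_C_le.trans_lt <|
    natDegree_pos_iff_degree_pos.1 <| Nat.pos_of_ne_zero hdeg

theorem degree_divByMonic_lt_of_degree_lt_add (hmonic : h.Monic) {m : ℕ}
    (hp : p.degree < ((h.natDegree + m : ℕ) : WithBot ℕ)) :
    (p /ₘ h).degree < (m : WithBot ℕ) := by
  nontriviality R
  rcases lt_or_ge p.degree h.degree with hlt | hle
  · rw [(divByMonic_eq_zero_iff hmonic).2 hlt, degree_zero]
    exact WithBot.bot_lt_coe m
  · rw [← degree_add_divByMonic hmonic hle, degree_eq_natDegree hmonic.ne_zero, Nat.cast_add] at hp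
    exact lt_of_add_lt_add_left hp

theorem degree_mul_X_add_C_lt_succ {n : ℕ} (hp : p.degree < (n : WithBot ℕ)) (c : R) :
    (p * X + C c).degree < ((n + 1 : ℕ) : WithBot ℕ) := by
  rw [degree_lt_iff_coeff_zero] at hp ⊢
  rintro (_ | m) hm
  · omega
  · rw [coeff_add, coeff_mul_X, coeff_C_succ, add_zero, hp m (by omega)]

theorem modByMonic_sub_C_eq_smul_add (hmonic : h.Monic) (hdeg : h.natDegree ≠ 0) (p : R[X])
    (z : R) : p %ₘ (h - C z) = z • ((p /ₘ h) %ₘ (h - C z)) + p %ₘ h := by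
  nontriviality R
  have hz : (h - C z).Monic := monic_sub_C_of_natDegree_ne_zero hmonic hdeg z
  have hdegree : (h - C z).degree = h.degree := by
    rw [degree_eq_natDegree hz.ne_zero, degree_eq_natDegree hmonic.ne_zero, natDegree_sub_C]
  have hrem : (p %ₘ h) %ₘ (h - C z) = p %ₘ h := by
    rw [modByMonic_eq_self_iff hz, hdegree]
    exact degree_modByMonic_lt p hmonic
  have hdvd : h - C z ∣ p - (z • (p /ₘ h) + p %ₘ h) := by
    refine ⟨p /ₘ h, ?_⟩
    rw [smul_eq_C_mul]
    linear_combination -modByMonic_add_div p h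
  rw [modByMonic_eq_of_dvd_sub hz hdvd, add_modByMonic, smul_modByMonic, hrem]

theorem exists_degree_lt_eval_eq_coeff_modByMonic_sub_C (hmonic : h.Monic)
    (hdeg : h.natDegree ≠ 0) {m n : ℕ}
    (hp : p.degree < ((h.natDegree * n + m : ℕ) : WithBot ℕ)) :
    ∃ P : R[X], P.degree < (n : WithBot ℕ) ∧ ∀ z, P.eval z = (p %ₘ (h - C z)).coeff m := by
  induction n generalizing p with
  | zero =>
    refine ⟨0, WithBot.bot_lt_coe 0, fun z ↦ ?_⟩
    rw [mul_zero, zero_add] at hp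
    rw [eval_zero, coeff_eq_zero_of_degree_lt (degree_modByMonic_le_left.trans_lt hp)]
  | succ n ih =>
    have hquot : (p /ₘ h).degree < ((h.natDegree * n + m : ℕ) : WithBot ℕ) :=
      degree_divByMonic_lt_of_degree_lt_add hmonic <| by convert hp using 2; ring
    obtain ⟨Q, hQdeg, hQ⟩ := ih hquot
    refine ⟨Q * X + C ((p %ₘ h).coeff m), degree_mul_X_add_C_lt_succ hQdeg _, fun z ↦ ?_⟩
    rw [modByMonic_sub_C_eq_smul_add hmonic hdeg, coeff_add, coeff_smul, smul_eq_mul, ← hQ z]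
    simp [mul_comm]

theorem eval_modByMonic_sub_C_of_eval_eq {α z : R} (hα : h.eval α = z) :
    (p %ₘ (h - C z)).eval α = p.eval α :=
  eval₂_modByMonic_eq_self_of_root (f := RingHom.id R) <| by simp [eval₂_id, hα]

end Remainders

section Locality

variable {R ι : Type*} [CommRing R] [IsDomain R] {h : R[X]} {r : ℕ} {s : Finset ι} {y : ι → R}

theorem degree_modByMonic_sub_C_lt_of_forall_mem (hmonic : h.Monic) (hdeg : h.natDegree ≠ 0)
    (hy : Set.InjOn y s) {p : R[X]}
    (hp : p.degree < ((h.natDegree * s.card + r : ℕ) : WithBot ℕ))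
    (hres : ∀ i ∈ s, (p %ₘ (h - C (y i))).degree < (r : WithBot ℕ)) (z : R) :
    (p %ₘ (h - C z)).degree < (r : WithBot ℕ) := by
  rw [degree_lt_iff_coeff_zero]
  intro m hrm
  have hpm : p.degree < ((h.natDegree * s.card + m : ℕ) : WithBot ℕ) :=
    hp.trans_le <| by gcongr
  obtain ⟨P, hPdeg, hP⟩ := exists_degree_lt_eval_eq_coeff_modByMonic_sub_C hmonic hdeg hpm
  have hPzero : P = 0 := eq_zero_of_degree_lt_of_eval_index_eq_zero s hy hPdeg fun i hi ↦ by
    rw [hP, (degree_lt_iff_coeff_zero _ _).1 (hres i hi) m hrm]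
  rw [← hP, hPzero, eval_zero]

theorem stmt_6_general (hmonic : h.Monic) (hdeg : h.natDegree ≠ 0) (hy : Set.InjOn y s)
    {f g : R[X]}
    (hfdeg : f.degree < ((h.natDegree * s.card + r : ℕ) : WithBot ℕ))
    (hgdeg : g.degree < ((h.natDegree * s.card + r : ℕ) : WithBot ℕ))
    (hfres : ∀ i ∈ s, (f %ₘ (h - C (y i))).degree < (r : WithBot ℕ))
    (hgres : ∀ i ∈ s, (g %ₘ (h - C (y i))).degree < (r : WithBot ℕ))
    {z : R} {B : Finset R} (hB : ∀ β ∈ B, h.eval β = z) (hBcard : r ≤ B.card)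
    (heq : ∀ β ∈ B, f.eval β = g.eval β) {α : R} (hα : h.eval α = z) :
    f.eval α = g.eval α := by
  have hdiff : ((f - g) %ₘ (h - C z)).degree < (r : WithBot ℕ) := by
    refine degree_modByMonic_sub_C_lt_of_forall_mem hmonic hdeg hy
      ((degree_sub_le f g).trans_lt (max_lt hfdeg hgdeg)) (fun i hi ↦ ?_) z
    rw [sub_modByMonic]
    exact (degree_sub_le _ _).trans_lt (max_lt (hfres i hi) (hgres i hi))
  have hzero : (f - g) %ₘ (h - C z) = 0 := by
    refine eq_zero_of_degree_lt_of_eval_finset_eq_zero B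
      (hdiff.trans_le (Nat.cast_le.2 hBcard)) fun β hβ ↦ ?_
    rw [eval_modByMonic_sub_C_of_eval_eq (hB β hβ), eval_sub, heq β hβ, sub_self]
  rw [← sub_eq_zero, ← eval_sub, ← eval_modByMonic_sub_C_of_eval_eq hα, hzero, eval_zero]

end Locality

/-- `(r, u-r+1)`-locality: if two encoding polynomials agree on at least `r`
points of a rack `A i` (a `u`-element set on which the good polynomial `h` is
constant equal to `y i`), then they agree on all of `A i`. -/
theorem stmt_6 {F : Type*} [Field F] [Fintype F]
    (h : F[X]) (u r kb nb : ℕ)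
    (hmonic : h.Monic) (hdeg : h.natDegree = u) (hr : 0 < r) (hru : r < u)
    (hk : 0 < kb) (hkn : kb < nb)
    (y : Fin nb → F) (hy : Function.Injective y)
    (A : Fin nb → Finset F) (hcard : ∀ i, (A i).card = u)
    (hA : ∀ i : Fin nb, ∀ α ∈ A i, h.eval α = y i)
    (f g : F[X])
    (hfdeg : f.degree < ((u * (kb - 1) + r : ℕ) : WithBot ℕ))
    (hgdeg : g.degree < ((u * (kb - 1) + r : ℕ) : WithBot ℕ))
    (hfres : ∀ i : Fin nb, (i : ℕ) < kb →
      (f %ₘ (h - C (y i))).degree < ((r : ℕ) : WithBot ℕ))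
    (hgres : ∀ i : Fin nb, (i : ℕ) < kb →
      (g %ₘ (h - C (y i))).degree < ((r : ℕ) : WithBot ℕ))
    (i : Fin nb) (B : Finset F) (hB : B ⊆ A i) (hBcard : r ≤ B.card)
    (heq : ∀ α ∈ B, f.eval α = g.eval α) :
    ∀ α ∈ A i, f.eval α = g.eval α := by
  subst hdeg
  let s : Finset (Fin nb) := Finset.Iio ⟨kb - 1, by omega⟩
  have hs : s.card = kb - 1 := Fin.card_Iio _
  have hlt (j : Fin nb) (hj : j ∈ s) : (j : ℕ) < kb :=
    (Fin.lt_def.1 (Finset.mem_Iio.1 hj)).trans_le (Nat.sub_le kb 1)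
  rw [← hs] at hfdeg hgdeg
  exact fun α hα ↦ stmt_6_general hmonic (by omega) hy.injOn hfdeg hgdeg
    (fun j hj ↦ hfres j (hlt j hj)) (fun j hj ↦ hgres j (hlt j hj))
    (fun β hβ ↦ hA i β (hB hβ)) hBcard heq (hA i α hα)
end
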